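/- Let ρ0 ∈ (0,1), let t ∈ (0, min(2^{−1/ρ0}, e^{−7/2})], and let ρ ∈ (ρ0, 1). Then the derivative of the function ρ ↦ E_ρ(−t^ρ) at ρ is strictly positive. -/

import Mathlib

open Real Filter Topology

/-- The two-parameter Mittag-Leffler function `E_{ρ,μ}(z)` (real version). -/
noncomputable def mittagLeffler (ρ μ z : ℝ) : ℝ := ∑' k : ℕ, z ^ k / Real.Gamma (ρ * k + μ)

/-!
For `0 < t < 1` the derivative of `E_ρ(-t ^ ρ) = ∑ (-1) ^ k κ(ρ k)`, where `κ x = t ^ x / Γ(x + 1)`,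
is the alternating series `∑ (-1) ^ (k + 1) b_k` with `b_k = k s(ρ k)` and
`s = -κ' = (ψ(x + 1) - log t) κ`. The ratio `s(x + ρ) / s(x)` is bounded using the log-convexity of
`Γ` and `ψ(y) - ψ(x) = ∑ (1 / (x + n) - 1 / (y + n))`. When `t ≤ exp (-7 / 2)` and `t ^ ρ ≤ 1 / 2`
it is at most `3 / 4`, so `b_k` decreases from `k = 3` on and the derivative is at least
`b_1 - b_2 + b_3 - b_4`. This is positive because `b_2 < b_1` and `b_4 ≤ b_3` when `ρ ≥ 1 / 4`. For
small `ρ`, where `b_1 - b_2` may be negative, the four terms are compared with `b_1`, and positivity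
reduces to that of a cubic polynomial in `t ^ ρ`.
-/

lemma tangent_le_of_convexOn {s : Set ℝ} {f : ℝ → ℝ} {f' x y : ℝ} (hf : ConvexOn ℝ s f)
    (hx : x ∈ s) (hy : y ∈ s) (hf' : HasDerivAt f f' x) : f x + f' * (y - x) ≤ f y := by
  rcases lt_trichotomy x y with hxy | rfl | hxy
  · have hslope := hf.le_slope_of_hasDerivAt hx hy hxy hf'
    rw [slope_def_field, le_div_iff₀ (sub_pos.mpr hxy)] at hslope
    linarith
  · simp
  · have hslope := hf.slope_le_of_hasDerivAt hy hx hxy hf'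
    rw [slope_def_field, div_le_iff₀ (sub_pos.mpr hxy)] at hslope
    linarith

lemma sum_range_four_le_tsum_alternating {f : ℕ → ℝ} (hf : Summable fun k => (-1) ^ k * f k)
    (hanti : Antitone fun k => f (k + 2)) :
    f 0 - f 1 + f 2 - f 3 ≤ ∑' k, (-1) ^ k * f k := by
  have htail := ((hasSum_nat_add_iff' 2).mpr hf.hasSum).tendsto_sum_nat
  simp only [pow_add, even_two.neg_one_pow, mul_one] at htail
  have hle := hanti.alternating_series_le_tendsto htail 1
  simp only [mul_one, Finset.sum_range_succ, Finset.sum_range_zero] at hle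
  norm_num at hle
  linarith

section Digamma

/-- The digamma function `ψ = Γ' / Γ` on the real line. -/
noncomputable def digamma (x : ℝ) : ℝ := logDeriv Gamma x

variable {x y d : ℝ}

lemma hasDerivAt_Gamma_digamma (hx : 0 < x) : HasDerivAt Gamma (digamma x * Gamma x) x := by
  have hdiff : DifferentiableAt ℝ Gamma x :=
    differentiableAt_Gamma fun m => ((neg_nonpos.mpr m.cast_nonneg).trans_lt hx).ne'
  rw [digamma, logDeriv_apply, div_mul_cancel₀ _ (Gamma_pos_of_pos hx).ne']
  exact hdiff.hasDerivAt

lemma hasDerivAt_log_Gamma (hx : 0 < x) : HasDerivAt (log ∘ Gamma) (digamma x) x := by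
  have hΓ := (Gamma_pos_of_pos hx).ne'
  have h := (hasDerivAt_Gamma_digamma hx).log hΓ
  rwa [mul_div_cancel_right₀ _ hΓ] at h

lemma digamma_one : digamma 1 = -eulerMascheroniConstant := by
  rw [digamma, logDeriv_apply, hasDerivAt_Gamma_one.deriv, Gamma_one, div_one]

lemma log_Gamma_add_one (hx : 0 < x) : log (Gamma (x + 1)) = log x + log (Gamma x) := by
  rw [Gamma_add_one hx.ne', log_mul hx.ne' (Gamma_pos_of_pos hx).ne']

lemma digamma_add_one (hx : 0 < x) : digamma (x + 1) = digamma x + x⁻¹ := by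
  have hshift : HasDerivAt (fun y => log (Gamma (y + 1))) (digamma (x + 1)) x :=
    (hasDerivAt_log_Gamma (by linarith)).comp_add_const x 1
  have hsum : HasDerivAt (fun y => log y + log (Gamma y)) (x⁻¹ + digamma x) x :=
    (hasDerivAt_log hx.ne').add (hasDerivAt_log_Gamma hx)
  have heq : (fun y => log (Gamma (y + 1))) =ᶠ[𝓝 x] fun y => log y + log (Gamma y) :=
    (lt_mem_nhds hx).mono fun y => log_Gamma_add_one
  rw [add_comm (digamma x)]
  exact hshift.unique (hsum.congr_of_eventuallyEq heq)

lemma digamma_two : digamma 2 = 1 - eulerMascheroniConstant := by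
  rw [← one_add_one_eq_two, digamma_add_one one_pos, digamma_one, inv_one, neg_add_eq_sub]

lemma digamma_add_natCast (hx : 0 < x) (n : ℕ) :
    digamma (x + n) = digamma x + ∑ i ∈ Finset.range n, (x + i)⁻¹ := by
  induction n with
  | zero => simp
  | succ n ih =>
    rw [Finset.sum_range_succ, Nat.cast_succ, ← add_assoc, digamma_add_one (by positivity), ih,
      add_assoc]

lemma monotoneOn_digamma : MonotoneOn digamma (Set.Ioi 0) :=
  (convexOn_log_Gamma.monotoneOn_deriv fun _ hx =>
    (hasDerivAt_log_Gamma hx).differentiableAt).congr fun _ hx => (hasDerivAt_log_Gamma hx).deriv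

lemma neg_eulerMascheroniConstant_le_digamma (hx : 1 ≤ x) :
    -eulerMascheroniConstant ≤ digamma x :=
  digamma_one ▸ monotoneOn_digamma (Set.mem_Ioi.mpr one_pos)
    (Set.mem_Ioi.mpr (one_pos.trans_le hx)) hx

lemma log_Gamma_add_digamma_mul_sub_le (hx : 0 < x) (hy : 0 < y) :
    log (Gamma x) + digamma x * (y - x) ≤ log (Gamma y) :=
  tangent_le_of_convexOn convexOn_log_Gamma hx hy (hasDerivAt_log_Gamma hx)

lemma digamma_le_log (hx : 0 < x) : digamma x ≤ log x := by
  have h := log_Gamma_add_digamma_mul_sub_le hx (add_pos hx one_pos)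
  rw [log_Gamma_add_one hx] at h
  linarith

lemma log_sub_inv_le_digamma (hx : 0 < x) : log x - x⁻¹ ≤ digamma x := by
  have h := log_Gamma_add_digamma_mul_sub_le (add_pos hx one_pos) hx
  rw [log_Gamma_add_one hx, digamma_add_one hx] at h
  linarith

lemma tendsto_digamma_sub_log : Tendsto (fun x => digamma x - log x) atTop (𝓝 0) := by
  refine tendsto_of_tendsto_of_tendsto_of_le_of_le'
    (by simpa using (tendsto_inv_atTop_zero (𝕜 := ℝ)).neg) tendsto_const_nhds ?_ ?_
  · filter_upwards [eventually_gt_atTop 0] with x hx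
    linarith [log_sub_inv_le_digamma hx]
  · filter_upwards [eventually_gt_atTop 0] with x hx
    linarith [digamma_le_log hx]

lemma tendsto_digamma_add_sub_log (x : ℝ) :
    Tendsto (fun y => digamma (x + y) - log y) atTop (𝓝 0) := by
  have hshift := tendsto_digamma_sub_log.comp (tendsto_atTop_add_const_left atTop x tendsto_id)
  refine (hshift.add (tendsto_log_comp_add_sub_log x)).congr' (.of_forall fun y => ?_) |>.trans ?_
  · simp only [Function.comp_apply, id, add_comm y x]
    ring
  · simp

lemma hasSum_inv_sub_inv (hx : 0 < x) (hxy : x ≤ y) :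
    HasSum (fun n : ℕ => (x + n)⁻¹ - (y + n)⁻¹) (digamma y - digamma x) := by
  have hnonneg (n : ℕ) : 0 ≤ (x + n)⁻¹ - (y + n)⁻¹ :=
    sub_nonneg.mpr (inv_anti₀ (by positivity) (by linarith))
  rw [hasSum_iff_tendsto_nat_of_nonneg hnonneg]
  have htail := ((tendsto_digamma_add_sub_log y).sub (tendsto_digamma_add_sub_log x)).comp
    tendsto_natCast_atTop_atTop
  have hlim := htail.const_sub (digamma y - digamma x)
  rw [sub_zero, sub_zero] at hlim
  refine hlim.congr fun n => ?_
  simp only [Function.comp_apply, Finset.sum_sub_distrib, digamma_add_natCast hx,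
    digamma_add_natCast (hx.trans_le hxy)]
  ring

lemma hasSum_inv_sub_inv_succ (hx : 0 < x) :
    HasSum (fun n : ℕ => (x + n)⁻¹ - (x + 1 + n)⁻¹) x⁻¹ := by
  simpa [digamma_add_one hx] using hasSum_inv_sub_inv hx (le_add_of_nonneg_right zero_le_one)

lemma digamma_add_sub_le (hx : 1 / 2 < x) (hd : 0 ≤ d) :
    digamma (x + d) - digamma x ≤ d * (x - 1 / 2)⁻¹ := by
  -- Termwise `d / (z * (z + d)) ≤ d / ((z - 1 / 2) * (z + 1 / 2))`, a telescoping majorant.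
  have htele := (hasSum_inv_sub_inv_succ (sub_pos.mpr hx)).mul_left d
  refine hasSum_le (fun n => ?_) (hasSum_inv_sub_inv (by linarith) (by linarith)) htele
  obtain ⟨z, hz⟩ : ∃ z : ℝ, z = x + n := ⟨_, rfl⟩
  have : 1 / 2 < z := by linarith [n.cast_nonneg (α := ℝ)]
  rw [← hz, show x + d + n = z + d by linarith, show x - 1 / 2 + n = z - 1 / 2 by linarith,
    show x - 1 / 2 + 1 + n = z + 1 / 2 by linarith, inv_sub_inv (by linarith) (by linarith),
    inv_sub_inv (by linarith) (by linarith), add_sub_cancel_left,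
    show z + 1 / 2 - (z - 1 / 2) = 1 by ring, mul_one_div]
  exact div_le_div_of_nonneg_left hd (mul_pos (by linarith) (by linarith))
    (by nlinarith [mul_nonneg (show 0 ≤ z by linarith) hd])

lemma mul_inv_le_digamma_add_sub (hx : 0 < x) (hd : 0 ≤ d) (hd1 : d ≤ 1) :
    d * x⁻¹ ≤ digamma (x + d) - digamma x := by
  have htele := (hasSum_inv_sub_inv_succ hx).mul_left d
  refine hasSum_le (fun n => ?_) htele (hasSum_inv_sub_inv hx (by linarith))
  have hz : 0 < x + n := by positivity
  rw [add_right_comm x 1, add_right_comm x d, inv_sub_inv hz.ne' (by positivity),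
    inv_sub_inv hz.ne' (by positivity), add_sub_cancel_left, add_sub_cancel_left, mul_one_div]
  gcongr

end Digamma

section Kernel

/-- The function `x ↦ t ^ x / Γ (x + 1)`, whose values at `x = ρ * k` are, up to the sign
`(-1) ^ k`, the terms of the Mittag-Leffler series `E_ρ (-t ^ ρ)`. -/
noncomputable def mittagLefflerKernel (t x : ℝ) : ℝ := t ^ x / Gamma (x + 1)

/-- The rate of decrease `-κ'` of the kernel `κ x = t ^ x / Γ (x + 1)`; the sign makes it positive
for `0 ≤ x` and small `t`. -/
noncomputable def mittagLefflerDecay (t x : ℝ) : ℝ :=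
  (digamma (x + 1) - log t) * mittagLefflerKernel t x

/-- The `k`-th term, without its sign `(-1) ^ (k + 1)`, of the derivative in `ρ` of
`E_ρ (-t ^ ρ)`. -/
noncomputable def mittagLefflerDerivTerm (t ρ : ℝ) (k : ℕ) : ℝ := k * mittagLefflerDecay t (ρ * k)

variable {t ρ x d a L : ℝ}

lemma mittagLefflerKernel_pos (ht : 0 < t) (hx : -1 < x) : 0 < mittagLefflerKernel t x :=
  div_pos (rpow_pos_of_pos ht x) (Gamma_pos_of_pos (by linarith))

lemma neg_rpow_pow_div_Gamma (ht : 0 < t) (r : ℝ) (k : ℕ) :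
    (-(t ^ r)) ^ k / Gamma (r * k + 1) = (-1) ^ k * mittagLefflerKernel t (r * k) := by
  rw [mittagLefflerKernel, rpow_mul_natCast ht.le, neg_pow, mul_div_assoc]

lemma hasDerivAt_mittagLefflerKernel (ht : 0 < t) (hx : -1 < x) :
    HasDerivAt (mittagLefflerKernel t) (-mittagLefflerDecay t x) x := by
  have hx' : 0 < x + 1 := by linarith
  have hΓ := (Gamma_pos_of_pos hx').ne'
  have h := ((hasStrictDerivAt_const_rpow ht x).hasDerivAt).div
    ((hasDerivAt_Gamma_digamma hx').comp_add_const x 1) hΓ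
  refine h.congr_deriv ?_
  rw [mittagLefflerDecay, mittagLefflerKernel]
  field_simp
  ring

lemma hasDerivAt_neg_one_pow_mul_mittagLefflerKernel (ht : 0 < t) (hρ : 0 < ρ) (k : ℕ) :
    HasDerivAt (fun r => (-1) ^ k * mittagLefflerKernel t (r * k))
      (-((-1) ^ k * mittagLefflerDerivTerm t ρ k)) ρ := by
  have hk : -1 < ρ * k := by linarith [mul_nonneg hρ.le (k.cast_nonneg (α := ℝ))]
  have h := ((hasDerivAt_mittagLefflerKernel ht hk).comp ρ
    (hasDerivAt_mul_const (k : ℝ))).const_mul ((-1) ^ k)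
  refine h.congr_deriv ?_
  rw [mittagLefflerDerivTerm]
  ring

lemma one_half_lt_Gamma (hx : 1 ≤ x) : 1 / 2 < Gamma x := by
  have h := tangent_le_of_convexOn convexOn_Gamma (Set.mem_Ioi.mpr two_pos)
    (Set.mem_Ioi.mpr (one_pos.trans_le hx)) (hasDerivAt_Gamma_digamma two_pos)
  rw [Gamma_two, digamma_two] at h
  nlinarith [one_half_lt_eulerMascheroniConstant, eulerMascheroniConstant_lt_two_thirds]

lemma abs_digamma_le (hx : 1 ≤ x) : |digamma x| ≤ x := by
  have hx0 : 0 < x := one_pos.trans_le hx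
  refine abs_le.mpr ⟨?_, ?_⟩
  · linarith [neg_eulerMascheroniConstant_le_digamma hx, eulerMascheroniConstant_lt_two_thirds]
  · linarith [digamma_le_log hx0, log_le_sub_one_of_pos hx0]

lemma mittagLefflerKernel_le (ht : 0 < t) (hx : 0 ≤ x) : mittagLefflerKernel t x ≤ 2 * t ^ x := by
  have hΓ := one_half_lt_Gamma (le_add_of_nonneg_left hx)
  rw [mittagLefflerKernel, div_le_iff₀ (by linarith)]
  nlinarith [rpow_pos_of_pos ht x]

lemma abs_mittagLefflerDecay_le (ht : 0 < t) (hx : 0 ≤ x) :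
    |mittagLefflerDecay t x| ≤ (x + 1 + |log t|) * (2 * t ^ x) := by
  have hκ := mittagLefflerKernel_pos ht (show -1 < x by linarith)
  rw [mittagLefflerDecay, abs_mul, abs_of_pos hκ]
  have hψ := abs_digamma_le (le_add_of_nonneg_left hx)
  have := (abs_sub (digamma (x + 1)) (log t)).trans (add_le_add_left hψ _)
  exact mul_le_mul this (mittagLefflerKernel_le ht hx) hκ.le (by positivity)

lemma rpow_mul_natCast_le_pow (ht : 0 < t) (ht1 : t ≤ 1) {r₀ r : ℝ} (hr : r₀ ≤ r) (k : ℕ) :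
    t ^ (r * k) ≤ (t ^ r₀) ^ k := by
  rw [rpow_mul_natCast ht.le]
  exact pow_le_pow_left₀ (rpow_nonneg ht.le r) (rpow_le_rpow_of_exponent_ge ht ht1 hr) k

lemma abs_mittagLefflerDerivTerm_le (ht : 0 < t) (ht1 : t ≤ 1) {r₀ r r₁ : ℝ} (hr₀ : 0 ≤ r₀)
    (hr₀r : r₀ ≤ r) (hrr₁ : r ≤ r₁) (k : ℕ) :
    |mittagLefflerDerivTerm t r k| ≤
      2 * r₁ * (k ^ 2 * (t ^ r₀) ^ k) + 2 * (1 + |log t|) * (k * (t ^ r₀) ^ k) := by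
  have hr : 0 ≤ r := hr₀.trans hr₀r
  rw [mittagLefflerDerivTerm, abs_mul, Nat.abs_cast]
  calc k * |mittagLefflerDecay t (r * k)|
      ≤ k * ((r * k + 1 + |log t|) * (2 * t ^ (r * k))) := by
        gcongr
        exact abs_mittagLefflerDecay_le ht (by positivity)
    _ ≤ k * ((r₁ * k + 1 + |log t|) * (2 * (t ^ r₀) ^ k)) := by
        have := hr.trans hrr₁
        gcongr
        exact rpow_mul_natCast_le_pow ht ht1 hr₀r k
    _ = _ := by ring

lemma summable_mittagLefflerDerivTerm_bound (ht : 0 < t) (ht1 : t < 1) {r₀ : ℝ} (hr₀ : 0 < r₀)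
    (A B : ℝ) : Summable fun k : ℕ => A * (k ^ 2 * (t ^ r₀) ^ k) + B * (k * (t ^ r₀) ^ k) := by
  have hq : ‖t ^ r₀‖ < 1 := by
    rw [norm_of_nonneg (rpow_nonneg ht.le r₀)]
    exact rpow_lt_one ht.le ht1 hr₀
  have hlin : Summable fun k : ℕ => k * (t ^ r₀) ^ k := by
    simpa using summable_pow_mul_geometric_of_norm_lt_one 1 hq
  exact ((summable_pow_mul_geometric_of_norm_lt_one 2 hq).mul_left A).add (hlin.mul_left B)

lemma summable_neg_one_pow_mul_mittagLefflerDerivTerm (ht : 0 < t) (ht1 : t < 1) (hρ : 0 < ρ) :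
    Summable fun k => (-1) ^ k * mittagLefflerDerivTerm t ρ k := by
  refine .of_norm_bounded
    (summable_mittagLefflerDerivTerm_bound ht ht1 hρ (2 * ρ) (2 * (1 + |log t|))) fun k => ?_
  rw [norm_mul, norm_pow, norm_neg, norm_one, one_pow, one_mul]
  exact abs_mittagLefflerDerivTerm_le ht ht1.le hρ.le le_rfl le_rfl k

lemma summable_neg_one_pow_mul_mittagLefflerKernel (ht : 0 < t) (ht1 : t < 1) (hρ : 0 < ρ) :
    Summable fun k : ℕ => (-1) ^ k * mittagLefflerKernel t (ρ * k) := by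
  have hgeom := (summable_geometric_of_lt_one (rpow_nonneg ht.le ρ)
    (rpow_lt_one ht.le ht1 hρ)).mul_left 2
  refine .of_norm_bounded hgeom fun k => ?_
  have hx : 0 ≤ ρ * k := by positivity
  rw [norm_mul, norm_pow, norm_neg, norm_one, one_pow, one_mul,
    norm_of_nonneg (mittagLefflerKernel_pos ht (by linarith)).le, ← rpow_mul_natCast ht.le]
  exact mittagLefflerKernel_le ht hx

lemma hasDerivAt_mittagLeffler_neg_rpow (ht : 0 < t) (ht1 : t < 1) (hρ : 0 < ρ) :
    HasDerivAt (fun r => mittagLeffler r 1 (-(t ^ r)))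
      (∑' k, (-1) ^ k * mittagLefflerDerivTerm t ρ (k + 1)) ρ := by
  have hmem : ρ ∈ Set.Ioo (ρ / 2) (ρ + 1) := ⟨half_lt_self hρ, lt_add_one ρ⟩
  have hderiv := hasDerivAt_tsum_of_isPreconnected
    (summable_mittagLefflerDerivTerm_bound ht ht1 (half_pos hρ) (2 * (ρ + 1)) (2 * (1 + |log t|)))
    isOpen_Ioo isPreconnected_Ioo
    (fun k r hr => hasDerivAt_neg_one_pow_mul_mittagLefflerKernel ht ((half_pos hρ).trans hr.1) k)
    (fun k r hr => by
      rw [norm_neg, norm_mul, norm_pow, norm_neg, norm_one, one_pow, one_mul]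
      exact abs_mittagLefflerDerivTerm_le ht ht1.le (half_pos hρ).le hr.1.le hr.2.le k)
    hmem (summable_neg_one_pow_mul_mittagLefflerKernel ht ht1 hρ) hmem
  simp only [mittagLeffler, neg_rpow_pow_div_Gamma ht]
  refine hderiv.congr_deriv ?_
  rw [tsum_neg,
    (summable_neg_one_pow_mul_mittagLefflerDerivTerm ht ht1 hρ).tsum_eq_zero_add, ← sub_eq_zero]
  simp only [mittagLefflerDerivTerm, Nat.cast_zero, pow_succ, mul_neg_one, neg_mul, tsum_neg]
  ring

lemma mittagLefflerKernel_add_le (ht : 0 < t) (hx : -1 < x) (hd : 0 ≤ d)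
    (ha : a ≤ digamma (x + 1)) :
    mittagLefflerKernel t (x + d) ≤ t ^ d * exp (-(d * a)) * mittagLefflerKernel t x := by
  have hΓ := Gamma_pos_of_pos (show 0 < x + 1 by linarith)
  have hΓ' := Gamma_pos_of_pos (show 0 < x + d + 1 by linarith)
  have htangent := log_Gamma_add_digamma_mul_sub_le (show 0 < x + 1 by linarith)
    (show 0 < x + d + 1 by linarith)
  have hlog : log (Gamma (x + 1)) + d * a ≤ log (Gamma (x + d + 1)) := by nlinarith
  have hgrowth : Gamma (x + 1) * exp (d * a) ≤ Gamma (x + d + 1) := by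
    rwa [← exp_le_exp, exp_add, exp_log hΓ, exp_log hΓ'] at hlog
  calc t ^ (x + d) / Gamma (x + d + 1) ≤ t ^ (x + d) / (Gamma (x + 1) * exp (d * a)) := by
        have := rpow_nonneg ht.le (x + d)
        gcongr
    _ = t ^ d * exp (-(d * a)) * (t ^ x / Gamma (x + 1)) := by
        rw [rpow_add ht, exp_neg]
        field_simp

lemma mittagLefflerDecay_add_le (ht : 0 < t) (hx : 0 ≤ x) (hd : 0 ≤ d)
    (ha : a ≤ digamma (x + 1)) (hL : log t ≤ -L) (haL : 0 < a + L) :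
    mittagLefflerDecay t (x + d) ≤
      t ^ d * exp (d * (2 / ((2 * x + 1) * (a + L)) - a)) * mittagLefflerDecay t x := by
  obtain ⟨w, hw⟩ : ∃ w, w = digamma (x + 1) - log t := ⟨_, rfl⟩
  have : a + L ≤ w := by linarith
  have hψ := digamma_add_sub_le (show 1 / 2 < x + 1 by linarith) hd
  have hinv : d * (x + 1 - 1 / 2)⁻¹ = d * (2 / ((2 * x + 1) * (a + L))) * (a + L) := by
    rw [show x + 1 - 1 / 2 = (2 * x + 1) / 2 by ring]
    field_simp
  have hfactor : digamma (x + d + 1) - log t ≤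
      exp (d * (2 / ((2 * x + 1) * (a + L)))) * w := by
    calc digamma (x + d + 1) - log t
        ≤ (d * (2 / ((2 * x + 1) * (a + L))) + 1) * w := by
          rw [add_right_comm]
          nlinarith [show 0 ≤ d * (2 / ((2 * x + 1) * (a + L))) by positivity]
      _ ≤ _ := mul_le_mul_of_nonneg_right (add_one_le_exp _) (by linarith)
  calc mittagLefflerDecay t (x + d)
      ≤ exp (d * (2 / ((2 * x + 1) * (a + L)))) * w *
          (t ^ d * exp (-(d * a)) * mittagLefflerKernel t x) :=
        mul_le_mul hfactor (mittagLefflerKernel_add_le ht (by linarith) hd ha)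
          (mittagLefflerKernel_pos ht (by linarith)).le
          (mul_nonneg (exp_pos _).le (by linarith))
    _ = _ := by
        rw [mittagLefflerDecay, ← hw, mul_sub, sub_eq_add_neg, exp_add]
        ring

end Kernel

section Estimates

variable {t ρ x y : ℝ}

lemma eulerMascheroniConstant_lt_fifty_nine_div_hundred : eulerMascheroniConstant < 59 / 100 := by
  refine (eulerMascheroniConstant_lt_eulerMascheroniSeq' 64).trans ?_
  have hlog : log 64 = 6 * log 2 := by
    rw [show (64 : ℝ) = 2 ^ 6 by norm_num, log_pow]
    norm_num
  norm_num [eulerMascheroniSeq', harmonic, Finset.sum_range_succ, hlog]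
  linarith [log_two_gt_d9]

lemma exp_le_cubic (hx : 0 ≤ x) (hx1 : x ≤ 1) : exp x ≤ 1 + x + x ^ 2 / 2 + 2 / 9 * x ^ 3 := by
  have h := exp_bound' hx hx1 (n := 3) (by norm_num)
  norm_num [Finset.sum_range_succ, Nat.factorial] at h
  linarith

lemma add_sub_eulerMascheroniConstant_le_digamma (hx : 0 ≤ x) (hx1 : x ≤ 1) :
    x / 2 + x / (x + 1) - eulerMascheroniConstant ≤ digamma (x + 1) := by
  have hx' : 0 < x + 1 := by linarith
  have hgain := mul_inv_le_digamma_add_sub (two_pos (α := ℝ)) hx hx1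
  rw [digamma_two, show 2 + x = x + 1 + 1 by ring, digamma_add_one hx'] at hgain
  have : x / (x + 1) = 1 - (x + 1)⁻¹ := by field_simp; ring
  linarith

lemma log_Gamma_sub_log_Gamma_le (hx : 1 ≤ x) (hxy : x < y) (hy : y ≤ 2) :
    log (Gamma y) - log (Gamma x) ≤ (y - x) * (eulerMascheroniConstant * (x - 1) / (2 - x)) := by
  have htangent := log_Gamma_add_digamma_mul_sub_le one_pos (one_pos.trans_le hx)
  rw [Gamma_one, log_one, digamma_one] at htangent
  have hsecant := convexOn_log_Gamma.secant_mono (a := x) (x := y) (y := 2)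
    (Set.mem_Ioi.mpr (by linarith)) (Set.mem_Ioi.mpr (by linarith)) (Set.mem_Ioi.mpr two_pos)
    hxy.ne' (hxy.trans_le hy).ne' hy
  simp only [Function.comp_apply, Gamma_two, log_one, zero_sub] at hsecant
  rw [div_le_iff₀' (sub_pos.mpr hxy)] at hsecant
  refine hsecant.trans (mul_le_mul_of_nonneg_left ?_ (sub_nonneg.mpr hxy.le))
  exact div_le_div_of_nonneg_right (by linarith) (by linarith)

lemma nine_tenths_mul_Gamma_three_mul_le (hρ : 0 < ρ) (hρ4 : ρ ≤ 1 / 4) :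
    9 / 10 * Gamma (3 * ρ + 1) ≤ Gamma (ρ + 1) := by
  have hΓ := Gamma_pos_of_pos (show 0 < ρ + 1 by linarith)
  have hΓ' := Gamma_pos_of_pos (show 0 < 3 * ρ + 1 by linarith)
  have hsub := log_Gamma_sub_log_Gamma_le (show 1 ≤ ρ + 1 by linarith)
    (show ρ + 1 < 3 * ρ + 1 by linarith) (by linarith)
  have hsmall : (3 * ρ + 1 - (ρ + 1)) *
      (eulerMascheroniConstant * (ρ + 1 - 1) / (2 - (ρ + 1))) ≤ 1 / 10 := by
    rw [mul_div_assoc', div_le_iff₀ (by linarith)]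
    nlinarith [mul_le_mul_of_nonneg_right eulerMascheroniConstant_lt_fifty_nine_div_hundred.le
      (sq_nonneg ρ)]
  have hlog : log (9 / 10) ≤ -(1 / 10) :=
    (log_le_sub_one_of_pos (by norm_num)).trans (by norm_num)
  rw [← log_le_log_iff (by positivity) hΓ, log_mul (by norm_num) hΓ'.ne']
  linarith

lemma rpow_mul_exp_seven_halves_le_one (ht : 0 < t) (ht_exp : t ≤ exp (-(7 / 2))) (hρ : 0 ≤ ρ) :
    t ^ ρ * exp (7 / 2 * ρ) ≤ 1 := by
  calc t ^ ρ * exp (7 / 2 * ρ) ≤ exp (-(7 / 2)) ^ ρ * exp (7 / 2 * ρ) := by gcongr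
    _ = 1 := by rw [← exp_mul, ← exp_add, neg_mul, neg_add_cancel, exp_zero]

lemma log_le_neg_seven_halves (ht : 0 < t) (ht_exp : t ≤ exp (-(7 / 2))) : log t ≤ -(7 / 2) :=
  (log_le_iff_le_exp ht).mpr ht_exp

lemma mittagLefflerDecay_pos (ht : 0 < t) (ht_exp : t ≤ exp (-(7 / 2))) (hx : 0 ≤ x) :
    0 < mittagLefflerDecay t x := by
  refine mul_pos ?_ (mittagLefflerKernel_pos ht (by linarith))
  linarith [log_le_neg_seven_halves ht ht_exp, eulerMascheroniConstant_lt_two_thirds,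
    neg_eulerMascheroniConstant_le_digamma (le_add_of_nonneg_left hx)]

lemma mittagLefflerDecay_add_le_three_quarters (ht : 0 < t) (ht_exp : t ≤ exp (-(7 / 2)))
    (hρ : 0 ≤ ρ) (hp : t ^ ρ ≤ 1 / 2) (hx : 0 ≤ x) :
    mittagLefflerDecay t (x + ρ) ≤ 3 / 4 * mittagLefflerDecay t x := by
  have hψ : -(59 / 100) ≤ digamma (x + 1) := by
    linarith [eulerMascheroniConstant_lt_fifty_nine_div_hundred,
      neg_eulerMascheroniConstant_le_digamma (le_add_of_nonneg_left hx)]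
  have hstep := mittagLefflerDecay_add_le ht hx hρ hψ (log_le_neg_seven_halves ht ht_exp)
    (by norm_num)
  refine hstep.trans (mul_le_mul_of_nonneg_right ?_ (mittagLefflerDecay_pos ht ht_exp hx).le)
  have hexponent : 2 / ((2 * x + 1) * (-(59 / 100) + 7 / 2)) - -(59 / 100) ≤ 7 / 4 := by
    rw [sub_le_iff_le_add, div_le_iff₀ (by positivity)]
    linarith
  have hsquare : (t ^ ρ * exp (ρ * (7 / 4))) ^ 2 ≤ 1 / 2 := by
    calc (t ^ ρ * exp (ρ * (7 / 4))) ^ 2 = t ^ ρ * (t ^ ρ * exp (7 / 2 * ρ)) := by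
          rw [mul_pow, ← exp_nat_mul]
          ring_nf
      _ ≤ 1 / 2 * 1 := by
          gcongr
          exact rpow_mul_exp_seven_halves_le_one ht ht_exp hρ
      _ = 1 / 2 := mul_one _
  calc _ ≤ t ^ ρ * exp (ρ * (7 / 4)) := by gcongr
    _ ≤ 3 / 4 := by nlinarith

lemma antitone_mittagLefflerDerivTerm (ht : 0 < t) (ht_exp : t ≤ exp (-(7 / 2))) (hρ : 0 ≤ ρ)
    (hp : t ^ ρ ≤ 1 / 2) : Antitone fun k => mittagLefflerDerivTerm t ρ (k + 3) := by
  refine antitone_nat_of_succ_le fun k => ?_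
  have hx : 0 ≤ ρ * (k + 3 : ℕ) := by positivity
  have hstep := mittagLefflerDecay_add_le_three_quarters ht ht_exp hρ hp hx
  have hpos := mittagLefflerDecay_pos ht ht_exp hx
  rw [← mul_add_one, ← Nat.cast_add_one] at hstep
  rw [mittagLefflerDerivTerm, mittagLefflerDerivTerm, add_right_comm]
  push_cast at hstep hpos ⊢
  nlinarith [k.cast_nonneg (α := ℝ)]

lemma two_mul_mittagLefflerDecay_two_mul_lt (ht : 0 < t) (ht_exp : t ≤ exp (-(7 / 2)))
    (hρ : 1 / 4 ≤ ρ) : 2 * mittagLefflerDecay t (2 * ρ) < mittagLefflerDecay t ρ := by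
  have hρ0 : 0 ≤ ρ := by linarith
  have hψ : -(53 / 200) ≤ digamma (ρ + 1) := by
    have hquarter := add_sub_eulerMascheroniConstant_le_digamma (x := 1 / 4) (by norm_num)
      (by norm_num)
    have hmono := monotoneOn_digamma (Set.mem_Ioi.mpr (by norm_num))
      (Set.mem_Ioi.mpr (by linarith)) (show 1 / 4 + 1 ≤ ρ + 1 by linarith)
    norm_num at hquarter hmono
    linarith [eulerMascheroniConstant_lt_fifty_nine_div_hundred]
  have hstep := mittagLefflerDecay_add_le ht hρ0 hρ0 hψ (log_le_neg_seven_halves ht ht_exp)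
    (by norm_num)
  have hexponent : 2 / ((2 * ρ + 1) * (-(53 / 200) + 7 / 2)) - -(53 / 200) ≤ 7 / 10 := by
    rw [sub_le_iff_le_add, div_le_iff₀ (by positivity)]
    linarith
  have hfactor : t ^ ρ * exp (ρ * (2 / ((2 * ρ + 1) * (-(53 / 200) + 7 / 2)) - -(53 / 200)))
      < 1 / 2 := by
    calc _ ≤ t ^ ρ * exp (ρ * (7 / 10)) := by gcongr
      _ = t ^ ρ * exp (7 / 2 * ρ) * exp (-(14 / 5 * ρ)) := by
          rw [mul_assoc, ← exp_add]
          ring_nf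
      _ ≤ 1 * exp (-(14 / 5 * ρ)) := by
          gcongr
          exact rpow_mul_exp_seven_halves_le_one ht ht_exp hρ0
      _ < exp (-log 2) := by
          rw [one_mul, exp_lt_exp]
          linarith [log_two_lt_d9]
      _ = 1 / 2 := by rw [exp_neg, exp_log two_pos, one_div]
  rw [two_mul ρ]
  nlinarith [mittagLefflerDecay_pos ht ht_exp hρ0]

lemma mittagLefflerDecay_two_mul_le (ht : 0 < t) (ht_exp : t ≤ exp (-(7 / 2))) (hρ : 0 ≤ ρ)
    (hρ4 : ρ ≤ 1 / 4) :
    mittagLefflerDecay t (2 * ρ) ≤ 593 / 500 * t ^ ρ * mittagLefflerDecay t ρ := by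
  have hψ : 13 / 10 * ρ - 59 / 100 ≤ digamma (ρ + 1) := by
    have hlower := add_sub_eulerMascheroniConstant_le_digamma hρ (by linarith)
    have : 4 / 5 * ρ ≤ ρ / (ρ + 1) := by
      rw [le_div_iff₀ (by linarith)]
      nlinarith
    linarith [eulerMascheroniConstant_lt_fifty_nine_div_hundred]
  have hstep := mittagLefflerDecay_add_le ht hρ hρ hψ (log_le_neg_seven_halves ht ht_exp)
    (by linarith)
  rw [← two_mul] at hstep
  refine hstep.trans (mul_le_mul_of_nonneg_right ?_ (mittagLefflerDecay_pos ht ht_exp hρ).le)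
  have hexponent : ρ * (2 / ((2 * ρ + 1) * (13 / 10 * ρ - 59 / 100 + 7 / 2)) -
      (13 / 10 * ρ - 59 / 100)) ≤ 17 / 100 := by
    have hpos : 0 < (2 * ρ + 1) * (13 / 10 * ρ - 59 / 100 + 7 / 2) :=
      mul_pos (by linarith) (by linarith)
    rw [mul_sub, sub_le_iff_le_add, mul_div_assoc', div_le_iff₀ hpos]
    nlinarith [mul_nonneg hρ (sub_nonneg.mpr hρ4),
      mul_nonneg (sq_nonneg ρ) (sub_nonneg.mpr hρ4)]
  have hexp : exp (17 / 100) ≤ 593 / 500 :=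
    (exp_le_cubic (by norm_num) (by norm_num)).trans (by norm_num)
  rw [mul_comm (593 / 500)]
  gcongr
  exact (exp_le_exp.mpr hexponent).trans hexp

lemma mittagLefflerDecay_four_mul_le (ht : 0 < t) (ht_exp : t ≤ exp (-(7 / 2))) (hρ : 0 ≤ ρ)
    (hρ4 : ρ ≤ 1 / 4) :
    mittagLefflerDecay t (4 * ρ) ≤ 43 / 40 * t ^ ρ * mittagLefflerDecay t (3 * ρ) := by
  have hx : 0 ≤ 3 * ρ := by positivity
  have hψ : 3 * ρ - 59 / 100 ≤ digamma (3 * ρ + 1) := by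
    have hlower := add_sub_eulerMascheroniConstant_le_digamma hx (by linarith)
    have : 3 * ρ / 2 ≤ 3 * ρ / (3 * ρ + 1) :=
      div_le_div_of_nonneg_left hx (by linarith) (by linarith)
    linarith [eulerMascheroniConstant_lt_fifty_nine_div_hundred]
  have hstep := mittagLefflerDecay_add_le ht hx hρ hψ (log_le_neg_seven_halves ht ht_exp)
    (by linarith)
  rw [show 3 * ρ + ρ = 4 * ρ by ring] at hstep
  refine hstep.trans (mul_le_mul_of_nonneg_right ?_ (mittagLefflerDecay_pos ht ht_exp hx).le)
  have hexponent : ρ * (2 / ((2 * (3 * ρ) + 1) * (3 * ρ - 59 / 100 + 7 / 2)) -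
      (3 * ρ - 59 / 100)) ≤ 9 / 125 := by
    have hpos : 0 < (2 * (3 * ρ) + 1) * (3 * ρ - 59 / 100 + 7 / 2) :=
      mul_pos (by linarith) (by linarith)
    rw [mul_sub, sub_le_iff_le_add, mul_div_assoc', div_le_iff₀ hpos]
    nlinarith [sq_nonneg (ρ - 1 / 8), sq_nonneg (ρ * (ρ - 1 / 8)),
      mul_nonneg hρ (sq_nonneg (ρ - 1 / 8))]
  have hexp : exp (9 / 125) ≤ 43 / 40 :=
    (exp_le_cubic (by norm_num) (by norm_num)).trans (by norm_num)
  rw [mul_comm (43 / 40)]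
  gcongr
  exact (exp_le_exp.mpr hexponent).trans hexp

lemma le_mittagLefflerDecay_three_mul (ht : 0 < t) (ht_exp : t ≤ exp (-(7 / 2))) (hρ : 0 < ρ)
    (hρ4 : ρ ≤ 1 / 4) :
    9 / 10 * (t ^ ρ) ^ 2 * mittagLefflerDecay t ρ ≤ mittagLefflerDecay t (3 * ρ) := by
  have hκ := mittagLefflerKernel_pos ht (show -1 < ρ by linarith)
  have hψ := monotoneOn_digamma (Set.mem_Ioi.mpr (show 0 < ρ + 1 by linarith))
    (Set.mem_Ioi.mpr (by linarith)) (show ρ + 1 ≤ 3 * ρ + 1 by linarith)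
  have hlog : log t ≤ digamma (3 * ρ + 1) := by
    linarith [log_le_neg_seven_halves ht ht_exp, eulerMascheroniConstant_lt_two_thirds,
      neg_eulerMascheroniConstant_le_digamma (show 1 ≤ 3 * ρ + 1 by linarith)]
  have hkernel : 9 / 10 * (t ^ ρ) ^ 2 * mittagLefflerKernel t ρ ≤
      mittagLefflerKernel t (3 * ρ) := by
    have hΓ := Gamma_pos_of_pos (show 0 < ρ + 1 by linarith)
    have hΓ' := Gamma_pos_of_pos (show 0 < 3 * ρ + 1 by linarith)
    have hp := rpow_pos_of_pos ht ρ
    have hpow : t ^ (3 * ρ) = (t ^ ρ) ^ 3 := by rw [mul_comm, rpow_mul ht.le]; norm_cast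
    rw [mittagLefflerKernel, mittagLefflerKernel, hpow, mul_div_assoc', div_le_div_iff₀ hΓ hΓ']
    nlinarith [mul_le_mul_of_nonneg_left (nine_tenths_mul_Gamma_three_mul_le hρ hρ4)
      (pow_pos hp 3).le]
  calc 9 / 10 * (t ^ ρ) ^ 2 * mittagLefflerDecay t ρ
      = (digamma (ρ + 1) - log t) * (9 / 10 * (t ^ ρ) ^ 2 * mittagLefflerKernel t ρ) := by
        rw [mittagLefflerDecay]
        ring
    _ ≤ (digamma (3 * ρ + 1) - log t) * mittagLefflerKernel t (3 * ρ) :=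
        mul_le_mul (by linarith) hkernel (by positivity) (by linarith)

lemma sub_add_sub_mittagLefflerDecay_pos_of_le_quarter (ht : 0 < t) (ht_exp : t ≤ exp (-(7 / 2)))
    (hρ : 0 < ρ) (hρ4 : ρ ≤ 1 / 4) (hp : t ^ ρ ≤ 1 / 2) :
    0 < mittagLefflerDecay t ρ - 2 * mittagLefflerDecay t (2 * ρ) +
      3 * mittagLefflerDecay t (3 * ρ) - 4 * mittagLefflerDecay t (4 * ρ) := by
  have htwo := mittagLefflerDecay_two_mul_le ht ht_exp hρ.le hρ4
  have hthree := le_mittagLefflerDecay_three_mul ht ht_exp hρ hρ4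
  have hfour := mittagLefflerDecay_four_mul_le ht ht_exp hρ.le hρ4
  have hone := mittagLefflerDecay_pos ht ht_exp hρ.le
  have hp0 := rpow_pos_of_pos ht ρ
  generalize t ^ ρ = p at *
  -- The constants of the three comparisons leave a margin of only about `1 / 200` at `p = 1 / 2`.
  have hpoly : 0 < 1 - 2 * (593 / 500) * p + 9 / 10 * p ^ 2 * (3 - 4 * (43 / 40) * p) := by
    nlinarith [mul_nonneg hp0.le (sub_nonneg.mpr hp), mul_nonneg (sq_nonneg p) (sub_nonneg.mpr hp)]
  calc 0 < mittagLefflerDecay t ρ *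
        (1 - 2 * (593 / 500) * p + 9 / 10 * p ^ 2 * (3 - 4 * (43 / 40) * p)) := mul_pos hone hpoly
    _ = mittagLefflerDecay t ρ - 2 * (593 / 500 * p * mittagLefflerDecay t ρ) +
        9 / 10 * p ^ 2 * mittagLefflerDecay t ρ * (3 - 4 * (43 / 40) * p) := by ring
    _ ≤ mittagLefflerDecay t ρ - 2 * mittagLefflerDecay t (2 * ρ) +
        mittagLefflerDecay t (3 * ρ) * (3 - 4 * (43 / 40) * p) := by
        gcongr
        linarith
    _ ≤ _ := by linarith

lemma sub_add_sub_mittagLefflerDecay_pos (ht : 0 < t) (ht_exp : t ≤ exp (-(7 / 2))) (hρ : 0 < ρ)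
    (hp : t ^ ρ ≤ 1 / 2) :
    0 < mittagLefflerDecay t ρ - 2 * mittagLefflerDecay t (2 * ρ) +
      3 * mittagLefflerDecay t (3 * ρ) - 4 * mittagLefflerDecay t (4 * ρ) := by
  rcases le_total ρ (1 / 4) with hρ4 | hρ4
  · exact sub_add_sub_mittagLefflerDecay_pos_of_le_quarter ht ht_exp hρ hρ4 hp
  · have htwo := two_mul_mittagLefflerDecay_two_mul_lt ht ht_exp hρ4
    have hfour := mittagLefflerDecay_add_le_three_quarters ht ht_exp hρ.le hp
      (show 0 ≤ 3 * ρ by positivity)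
    rw [show 3 * ρ + ρ = 4 * ρ by ring] at hfour
    linarith

end Estimates

theorem deriv_mittagLeffler_pos_general {t ρ : ℝ} (ht : 0 < t) (ht_exp : t ≤ exp (-(7 / 2)))
    (hρ : 0 < ρ) (hp : t ^ ρ ≤ 1 / 2) :
    0 < deriv (fun r => mittagLeffler r 1 (-(t ^ r))) ρ := by
  have ht1 : t < 1 := ht_exp.trans_lt (exp_lt_one_iff.mpr (by norm_num))
  rw [(hasDerivAt_mittagLeffler_neg_rpow ht ht1 hρ).deriv]
  have hsummable : Summable fun k => (-1) ^ k * mittagLefflerDerivTerm t ρ (k + 1) := by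
    refine ((summable_nat_add_iff 1).mpr
      (summable_neg_one_pow_mul_mittagLefflerDerivTerm ht ht1 hρ)).neg.congr fun k => ?_
    ring
  have hfour := sub_add_sub_mittagLefflerDecay_pos ht ht_exp hρ hp
  refine lt_of_lt_of_le ?_ (sum_range_four_le_tsum_alternating hsummable
    (antitone_mittagLefflerDerivTerm ht ht_exp hρ.le hp))
  simpa [mittagLefflerDerivTerm, mul_comm ρ] using hfour

lemma rpow_le_one_half {t ρ₀ ρ : ℝ} (ht : 0 ≤ t) (ht_two : t ≤ 2 ^ (-1 / ρ₀)) (hρ₀ : 0 < ρ₀)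
    (hρ : ρ₀ ≤ ρ) : t ^ ρ ≤ 1 / 2 := by
  calc t ^ ρ ≤ (2 ^ (-1 / ρ₀)) ^ ρ := rpow_le_rpow ht ht_two (hρ₀.le.trans hρ)
    _ = 2 ^ (-(ρ / ρ₀)) := by rw [← rpow_mul two_pos.le, neg_div, neg_mul, one_div_mul_eq_div]
    _ ≤ 2 ^ (-1 : ℝ) :=
        rpow_le_rpow_of_exponent_le one_le_two (neg_le_neg ((one_le_div hρ₀).mpr hρ))
    _ = 1 / 2 := by rw [rpow_neg_one, one_div]

theorem deriv_mittagLeffler_pos (ρ₀ t ρ : ℝ) (hρ₀ : ρ₀ ∈ Set.Ioo (0:ℝ) 1)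
    (ht : t ∈ Set.Ioc 0 (min ((2:ℝ) ^ (-1 / ρ₀)) (Real.exp (-(7/2 : ℝ)))))
    (hρ : ρ ∈ Set.Ioo ρ₀ 1) :
    0 < deriv (fun r : ℝ => mittagLeffler r 1 (-(t ^ r))) ρ := by
  obtain ⟨ht_two, ht_exp⟩ := le_min_iff.mp ht.2
  exact deriv_mittagLeffler_pos_general ht.1 ht_exp (hρ₀.1.trans hρ.1)
    (rpow_le_one_half ht.1.le ht_two hρ₀.1 hρ.1.le)
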